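/- Let d ≥ 1, λ, η : Fin d → ℝ nonnegative with Σλ = Ση = 1, θ : Fin d × Fin d → ℝ, and j, j' ∈ Fin d. Let φ^{(j,j')} ∈ ℂ^d ⊗ ℂ^d have components √(λ_m η_{m'})·exp(−i[(2π/d²)(dj + j')(dm + m') + θ_{mm'}]). Define the diagonal unitaries U_a^{(j')} on ℂ^d by U_a^{(j')} e_m = exp(i(2π/d) j' m) e_m and U_b^{(j,j')} on ℂ^d by U_b^{(j,j')} e_{m'} = exp(i(2π/d²)(dj + j') m') e_{m'}. Then (U_a^{(j')} ⊗ U_b^{(j,j')}) φ^{(j,j')} = F, where F ∈ ℂ^d ⊗ ℂ^d has components F_{mm'} = exp(−iθ_{mm'})·√(λ_m η_{m'}); in particular the resulting state F is independent of the measurement outcome (j, j'). -/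

import Mathlib

open Matrix Kronecker

/-! Expanding `(2π/d²)(dj + j')(dm + m')` gives `2πjm`, which is invisible to the exponential,
plus `(2π/d) j' m`, which depends only on Alice's index, plus `(2π/d²)(dj + j') m'`, which depends
only on Bob's index. The outcome-dependent phase is therefore a product of local phases, and the
two diagonal corrections cancel it whatever the amplitudes of the shared state are. -/

theorem diagonal_kronecker_diagonal_mulVec {R m n : Type*} [NonUnitalNonAssocSemiring R]
    [Fintype m] [Fintype n] [DecidableEq m] [DecidableEq n] (a : m → R) (b : n → R)
    (v : m × n → R) :
    (diagonal a ⊗ₖ diagonal b) *ᵥ v = fun p => a p.1 * b p.2 * v p := by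
  funext p
  rw [diagonal_kronecker_diagonal, mulVec_diagonal]

theorem div_sq_mul_mul_add_mul_mul_add {K : Type*} [Field K] {d : K} (hd : d ≠ 0)
    (c j j' m m' : K) :
    c / d ^ 2 * (d * j + j') * (d * m + m') =
      c / d * j' * m + c / d ^ 2 * (d * j + j') * m' + j * m * c := by
  field_simp
  ring

theorem cexp_mul_cexp_neg_add_int_mul_two_pi_eq_one (x : ℝ) (n : ℤ) :
    Complex.exp (Complex.I * x) *
      Complex.exp (-(Complex.I * ((x + n * (2 * Real.pi) : ℝ) : ℂ))) = 1 := by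
  rw [← Complex.exp_add, ← Complex.exp_int_mul_two_pi_mul_I (-n)]
  congr 1
  push_cast
  ring

theorem local_phases_mul_outcome_phase_eq_one {d : ℕ} (hd : d ≠ 0) (j m : ℤ) (j' m' : ℝ) :
    Complex.exp (Complex.I * ((2 * Real.pi / d * j' * m : ℝ) : ℂ)) *
      Complex.exp (Complex.I * ((2 * Real.pi / (d : ℝ) ^ 2 * (d * j + j') * m' : ℝ) : ℂ)) *
      Complex.exp (-(Complex.I *
        ((2 * Real.pi / (d : ℝ) ^ 2 * (d * j + j') * (d * m + m') : ℝ) : ℂ))) = 1 := by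
  have hd' : (d : ℝ) ≠ 0 := Nat.cast_ne_zero.mpr hd
  rw [div_sq_mul_mul_add_mul_mul_add hd', ← Complex.exp_add, ← mul_add, ← Complex.ofReal_add,
    ← Int.cast_mul]
  exact cexp_mul_cexp_neg_add_int_mul_two_pi_eq_one _ (j * m)

theorem correction_step_yields_outcome_independent_state_general {d : ℕ} (j j' : ℤ)
    (F φ : Fin d × Fin d → ℂ)
    (hφ : ∀ m m', φ (m, m') =
      Complex.exp (-(Complex.I * ((2 * Real.pi / (d : ℝ) ^ 2 * (d * j + j') *
        (d * (m : ℕ) + (m' : ℕ)) : ℝ) : ℂ))) * F (m, m')) :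
    ((diagonal fun m : Fin d =>
        Complex.exp (Complex.I * ((2 * Real.pi / d * j' * (m : ℕ) : ℝ) : ℂ))) ⊗ₖ
      (diagonal fun m' : Fin d =>
        Complex.exp (Complex.I *
          ((2 * Real.pi / (d : ℝ) ^ 2 * (d * j + j') * (m' : ℕ) : ℝ) : ℂ)))) *ᵥ φ = F := by
  rw [diagonal_kronecker_diagonal_mulVec]
  funext ⟨m, m'⟩
  have phases_cancel := local_phases_mul_outcome_phase_eq_one m.pos.ne' j (m : ℕ) j' (m' : ℕ)
  rw [Int.cast_natCast] at phases_cancel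
  rw [hφ, ← mul_assoc, phases_cancel, one_mul]

/-- The correction step of the RPBES protocol: after outcome `(j,j')`, the shared
state of Alice and Bob is `φ^{(j,j')}` with components
`√(λ_m η_{m'}) exp(−i[(2π/d²)(dj + j')(dm + m') + θ_{mm'}])`.  Applying the diagonal
unitaries `U_a^{(j')} e_m = e^{i(2π/d) j' m} e_m` (Alice) and
`U_b^{(j,j')} e_{m'} = e^{i(2π/d²)(dj + j') m'} e_{m'}` (Bob) yields the vector `F`
with components `F_{mm'} = e^{−iθ_{mm'}} √(λ_m η_{m'})`, independent of `(j, j')`. -/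
theorem correction_step_yields_outcome_independent_state (d : ℕ) (hd : 1 ≤ d)
    (l e : Fin d → ℝ) (hl : ∀ k, 0 ≤ l k) (he : ∀ k, 0 ≤ e k)
    (hl1 : ∑ k, l k = 1) (he1 : ∑ k, e k = 1)
    (θ : Fin d × Fin d → ℝ) (j j' : Fin d)
    (φ : Fin d × Fin d → ℂ)
    (hφ : ∀ m m', φ (m, m') =
      ((Real.sqrt (l m * e m') : ℝ) : ℂ) *
        Complex.exp (-(Complex.I *
          (((2 * Real.pi / (d : ℝ) ^ 2) * ((d : ℝ) * (j : ℕ) + (j' : ℕ)) *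
            ((d : ℝ) * (m : ℕ) + (m' : ℕ)) + θ (m, m') : ℝ) : ℂ))))
    (Ua Ub : Matrix (Fin d) (Fin d) ℂ)
    (hUa : Ua = Matrix.diagonal fun m : Fin d =>
      Complex.exp (Complex.I * (((2 * Real.pi / (d : ℝ)) * (j' : ℕ) * (m : ℕ) : ℝ) : ℂ)))
    (hUb : Ub = Matrix.diagonal fun m' : Fin d =>
      Complex.exp (Complex.I * (((2 * Real.pi / (d : ℝ) ^ 2) *
        ((d : ℝ) * (j : ℕ) + (j' : ℕ)) * (m' : ℕ) : ℝ) : ℂ))) :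
    (Ua ⊗ₖ Ub).mulVec φ = fun p : Fin d × Fin d =>
      Complex.exp (-(Complex.I * ((θ p : ℝ) : ℂ))) *
        ((Real.sqrt (l p.1 * e p.2) : ℝ) : ℂ) := by
  subst hUa hUb
  simpa only [Int.cast_natCast] using
    correction_step_yields_outcome_independent_state_general j j'
      (fun p => Complex.exp (-(Complex.I * θ p)) * √(l p.1 * e p.2)) φ fun m m' => by
      rw [hφ, Complex.ofReal_add, mul_add, neg_add, Complex.exp_add, mul_comm, mul_assoc,
        Int.cast_natCast, Int.cast_natCast]
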